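/- Let L be a commutative ring, f, g ∈ L, let (φ, ψ) be a matrix factorization of f of size n and (φ', ψ') a matrix factorization of g of size m over L. Define the 2nm × 2nm block matrices E = [[φ ⊗ 1ₘ, 1ₙ ⊗ φ'], [−(1ₙ ⊗ ψ'), ψ ⊗ 1ₘ]] and F = [[ψ ⊗ 1ₘ, −(1ₙ ⊗ φ')], [1ₙ ⊗ ψ', φ ⊗ 1ₘ]]. Then E·F = (f + g)·I and F·E = (f + g)·I; that is, the Yoshino tensor product (E, F) is a matrix factorization of f + g of size 2nm. -/

import Mathlib

open Matrix Kronecker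

theorem fromBlocks_mul_fromBlocks_eq_fromBlocks_zero_of_commute {ι R : Type*} [Fintype ι]
    [NonUnitalNonAssocRing R] {A B C D : Matrix ι ι R} (hAB : Commute A B) (hDC : Commute D C) :
    fromBlocks A B (-C) D * fromBlocks D (-B) C A =
      fromBlocks (A * D + B * C) 0 0 (C * B + D * A) := by
  simp only [fromBlocks_multiply, Matrix.mul_neg, Matrix.neg_mul, neg_neg, hAB.eq, hDC.eq,
    neg_add_cancel]

/-- The pair `(φ, ψ)` is a matrix factorization of the scalar `f`. Square matrices may be indexed
by any finite type, so that block matrices and Kronecker products need no reindexing. -/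
structure IsMatrixFactorization {ι R : Type*} [Fintype ι] [DecidableEq ι] [Semiring R]
    (f : R) (φ ψ : Matrix ι ι R) : Prop where
  left_mul_right : φ * ψ = f • (1 : Matrix ι ι R)
  right_mul_left : ψ * φ = f • (1 : Matrix ι ι R)

namespace IsMatrixFactorization

theorem symm {ι R : Type*} [Fintype ι] [DecidableEq ι] [Semiring R] {f : R}
    {φ ψ : Matrix ι ι R} (h : IsMatrixFactorization f φ ψ) : IsMatrixFactorization f ψ φ :=
  ⟨h.right_mul_left, h.left_mul_right⟩

section Ring

variable {ι R : Type*} [Fintype ι] [DecidableEq ι] [Ring R]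

theorem neg {f : R} {φ ψ : Matrix ι ι R} (h : IsMatrixFactorization f φ ψ) :
    IsMatrixFactorization f (-φ) (-ψ) where
  left_mul_right := by rw [neg_mul_neg, h.left_mul_right]
  right_mul_left := by rw [neg_mul_neg, h.right_mul_left]

theorem fromBlocks_mul_fromBlocks_of_commute {f g : R} {A B C D : Matrix ι ι R}
    (hAD : IsMatrixFactorization f A D) (hBC : IsMatrixFactorization g B C)
    (hAB : Commute A B) (hDC : Commute D C) :
    fromBlocks A B (-C) D * fromBlocks D (-B) C A = (f + g) • 1 := by
  have diag₁ : A * D + B * C = (f + g) • 1 := by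
    rw [hAD.left_mul_right, hBC.left_mul_right, add_smul]
  have diag₂ : C * B + D * A = (f + g) • 1 := by
    rw [hBC.right_mul_left, hAD.right_mul_left, ← add_smul, add_comm]
  rw [fromBlocks_mul_fromBlocks_eq_fromBlocks_zero_of_commute hAB hDC, diag₁, diag₂,
    ← fromBlocks_one, fromBlocks_smul, smul_zero]

theorem fromBlocks_of_commute {f g : R} {A B C D : Matrix ι ι R}
    (hAD : IsMatrixFactorization f A D) (hBC : IsMatrixFactorization g B C)
    (hAB : Commute A B) (hAC : Commute A C) (hDB : Commute D B) (hDC : Commute D C) :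
    IsMatrixFactorization (f + g) (fromBlocks A B (-C) D) (fromBlocks D (-B) C A) where
  left_mul_right := hAD.fromBlocks_mul_fromBlocks_of_commute hBC hAB hDC
  right_mul_left := by
    -- Exchanging the two factors amounts to replacing `(A, B, C, D)` by `(D, -B, -C, A)`.
    simpa only [neg_neg] using
      hAD.symm.fromBlocks_mul_fromBlocks_of_commute hBC.neg hDB.neg_right hAC.neg_right

end Ring

section Kronecker

variable {ι κ R : Type*} [Fintype ι] [DecidableEq ι] [Fintype κ] [DecidableEq κ] [CommSemiring R]

theorem kronecker_one {f : R} {φ ψ : Matrix ι ι R} (h : IsMatrixFactorization f φ ψ) :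
    IsMatrixFactorization f (φ ⊗ₖ (1 : Matrix κ κ R)) (ψ ⊗ₖ (1 : Matrix κ κ R)) where
  left_mul_right := by
    rw [← mul_kronecker_mul, h.left_mul_right, one_mul, smul_kronecker, one_kronecker_one]
  right_mul_left := by
    rw [← mul_kronecker_mul, h.right_mul_left, one_mul, smul_kronecker, one_kronecker_one]

theorem one_kronecker {f : R} {φ ψ : Matrix ι ι R} (h : IsMatrixFactorization f φ ψ) :
    IsMatrixFactorization f ((1 : Matrix κ κ R) ⊗ₖ φ) ((1 : Matrix κ κ R) ⊗ₖ ψ) where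
  left_mul_right := by
    rw [← mul_kronecker_mul, h.left_mul_right, one_mul, kronecker_smul, one_kronecker_one]
  right_mul_left := by
    rw [← mul_kronecker_mul, h.right_mul_left, one_mul, kronecker_smul, one_kronecker_one]

end Kronecker

end IsMatrixFactorization

theorem commute_kronecker_one_one_kronecker {ι κ R : Type*} [Fintype ι] [DecidableEq ι]
    [Fintype κ] [DecidableEq κ] [CommSemiring R] (A : Matrix ι ι R) (B : Matrix κ κ R) :
    Commute (A ⊗ₖ (1 : Matrix κ κ R)) ((1 : Matrix ι ι R) ⊗ₖ B) := by
  rw [commute_iff_eq, ← mul_kronecker_mul, ← mul_kronecker_mul, mul_one, one_mul, one_mul, mul_one]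

theorem yoshino_tensor_product_is_matrix_factorization_general
    {ι κ L : Type*} [Fintype ι] [DecidableEq ι] [Fintype κ] [DecidableEq κ] [CommRing L]
    {f g : L} {φ ψ : Matrix ι ι L} {φ' ψ' : Matrix κ κ L}
    (h : IsMatrixFactorization f φ ψ) (h' : IsMatrixFactorization g φ' ψ') :
    IsMatrixFactorization (f + g)
      (fromBlocks (φ ⊗ₖ (1 : Matrix κ κ L)) ((1 : Matrix ι ι L) ⊗ₖ φ')
        (-((1 : Matrix ι ι L) ⊗ₖ ψ')) (ψ ⊗ₖ (1 : Matrix κ κ L)))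
      (fromBlocks (ψ ⊗ₖ (1 : Matrix κ κ L)) (-((1 : Matrix ι ι L) ⊗ₖ φ'))
        ((1 : Matrix ι ι L) ⊗ₖ ψ') (φ ⊗ₖ (1 : Matrix κ κ L))) :=
  h.kronecker_one.fromBlocks_of_commute h'.one_kronecker
    (commute_kronecker_one_one_kronecker φ φ') (commute_kronecker_one_one_kronecker φ ψ')
    (commute_kronecker_one_one_kronecker ψ φ') (commute_kronecker_one_one_kronecker ψ ψ')

/-- The Yoshino tensor product of a matrix factorization of `f` and a matrix
factorization of `g` is a matrix factorization of `f + g`. -/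
theorem yoshino_tensor_product_is_matrix_factorization
    {L : Type*} [CommRing L] (f g : L) (n m : ℕ)
    (φ ψ : Matrix (Fin n) (Fin n) L) (φ' ψ' : Matrix (Fin m) (Fin m) L)
    (hφψ : φ * ψ = f • (1 : Matrix (Fin n) (Fin n) L))
    (hψφ : ψ * φ = f • (1 : Matrix (Fin n) (Fin n) L))
    (hφψ' : φ' * ψ' = g • (1 : Matrix (Fin m) (Fin m) L))
    (hψφ' : ψ' * φ' = g • (1 : Matrix (Fin m) (Fin m) L)) :
    Matrix.fromBlocks (φ ⊗ₖ (1 : Matrix (Fin m) (Fin m) L))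
        ((1 : Matrix (Fin n) (Fin n) L) ⊗ₖ φ')
        (-((1 : Matrix (Fin n) (Fin n) L) ⊗ₖ ψ'))
        (ψ ⊗ₖ (1 : Matrix (Fin m) (Fin m) L)) *
      Matrix.fromBlocks (ψ ⊗ₖ (1 : Matrix (Fin m) (Fin m) L))
        (-((1 : Matrix (Fin n) (Fin n) L) ⊗ₖ φ'))
        ((1 : Matrix (Fin n) (Fin n) L) ⊗ₖ ψ')
        (φ ⊗ₖ (1 : Matrix (Fin m) (Fin m) L)) =
      (f + g) • 1 ∧
    Matrix.fromBlocks (ψ ⊗ₖ (1 : Matrix (Fin m) (Fin m) L))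
        (-((1 : Matrix (Fin n) (Fin n) L) ⊗ₖ φ'))
        ((1 : Matrix (Fin n) (Fin n) L) ⊗ₖ ψ')
        (φ ⊗ₖ (1 : Matrix (Fin m) (Fin m) L)) *
      Matrix.fromBlocks (φ ⊗ₖ (1 : Matrix (Fin m) (Fin m) L))
        ((1 : Matrix (Fin n) (Fin n) L) ⊗ₖ φ')
        (-((1 : Matrix (Fin n) (Fin n) L) ⊗ₖ ψ'))
        (ψ ⊗ₖ (1 : Matrix (Fin m) (Fin m) L)) =
      (f + g) • 1 := by
  have h := yoshino_tensor_product_is_matrix_factorization_general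
    (IsMatrixFactorization.mk hφψ hψφ) (IsMatrixFactorization.mk hφψ' hψφ')
  exact ⟨h.left_mul_right, h.right_mul_left⟩
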